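/- Let f0 = sup_{k≥0} 2^{k−2^k} χ_{[0,2^{2^k})} and a(t,f0) = (1/log(1+t)) ∫_0^t f0(s) ds. Then limsup_{t→∞} (M a(·,f0))(t) = 4/(e·log 2), where (Mg)(t) = (1/log t) ∫_1^t g(s) ds/s for t > 1. -/

import Mathlib

open MeasureTheory Filter Set

/-- `f0 = sup_{k ≥ 0} 2^(k - 2^k) χ_[0, 2^(2^k))`. -/
noncomputable def f0 : ℝ → ℝ := fun t =>
  ⨆ k : ℕ, if t < (2:ℝ) ^ (2 ^ k) then (2:ℝ) ^ ((k : ℤ) - 2 ^ k) else 0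

/-- `a(t, f0) = (1/log(1+t)) ∫_0^t f0(s) ds`. -/
noncomputable def aF : ℝ → ℝ := fun t => (∫ s in (0:ℝ)..t, f0 s) / Real.log (1 + t)

/-- The logarithmic Cesàro mean `(Mg)(t) = (1/log t) ∫_1^t g(s) ds/s`. -/
noncomputable def Mop (g : ℝ → ℝ) (t : ℝ) : ℝ := (∫ s in (1:ℝ)..t, g s / s) / Real.log t

/-!
On the block `2 ^ 2 ^ k ≤ s ≤ 2 ^ 2 ^ (k + 1)` the primitive of `f0` is `2 ^ (k + 1)` up to an error
that contributes only `O(k)` to `∫ a(s, f0) ds / s`, so on that block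
`∫_1^t a(s, f0) ds / s = 2 ^ (k + 1) * log (2 * r) + O(k ^ 2)`, where `r = log t / log (2 ^ 2 ^ k)`
runs through `[1, 2]`. Dividing by `log t = r * 2 ^ k * log 2` shows that `M a(·, f0)` follows the
profile `r ↦ 2 * log (2 * r) / (r * log 2)` up to `o(1)`. Since `log x / x` is maximal at `x = e`,
the profile is at most `4 / (e * log 2)`, and this value is attained at `r = e / 2 ∈ [1, 2]`, hence
approached on every block.
-/

open Real Topology

section Limsup

variable {α β : Type*} [ConditionallyCompleteLinearOrder α] [TopologicalSpace α] [OrderTopology α]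
  [NoMaxOrder α] [NoMinOrder α]

theorem limsup_eq_of_mapClusterPt {u : β → α} {f : Filter β} {L : α} (hL : MapClusterPt L f u)
    (hlt : ∀ y > L, ∀ᶠ x in f, u x < y) : limsup u f = L := by
  obtain ⟨b, hb⟩ := exists_gt L
  obtain ⟨a, ha⟩ := exists_lt L
  have bounded : f.IsBoundedUnder (· ≤ ·) u :=
    isBoundedUnder_of_eventually_le ((hlt b hb).mono fun _ ↦ le_of_lt)
  have cobounded : f.IsCoboundedUnder (· ≤ ·) u :=
    IsCoboundedUnder.of_frequently_ge ((hL.frequently (Ioi_mem_nhds ha)).mono fun _ ↦ le_of_lt)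
  exact le_antisymm ((limsup_le_iff cobounded bounded).2 hlt) (hL.le_limsup bounded)

end Limsup

section Log

lemma log_le_div_exp_one {x : ℝ} (hx : 0 < x) : log x ≤ x / exp 1 := by
  rw [le_div_iff₀' (exp_pos 1)]
  simpa only [exp_log hx] using exp_one_mul_le_exp (x := log x)

lemma log_one_add_sub_log_le {s : ℝ} (hs : 0 < s) : log (1 + s) - log s ≤ s⁻¹ := by
  rw [← log_div (by positivity) hs.ne']
  calc log ((1 + s) / s) ≤ (1 + s) / s - 1 := log_le_sub_one_of_pos (by positivity)
    _ = s⁻¹ := by field_simp; ring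

lemma abs_div_log_one_add_sub_div_log_le (x y : ℝ) {s : ℝ} (hs : 1 < s) :
    |x / log (1 + s) - y / log s| ≤ (|x - y| + |y| / (s * log s)) / log s := by
  have hs0 : 0 < s := one_pos.trans hs
  have hlog : 0 < log s := log_pos hs
  have hle : log s ≤ log (1 + s) := log_le_log hs0 (by linarith)
  have hlog' : 0 < log (1 + s) := hlog.trans_le hle
  have hdiff : |log s - log (1 + s)| ≤ s⁻¹ := by
    rw [abs_sub_comm, abs_of_nonneg (sub_nonneg.2 hle)]
    exact log_one_add_sub_log_le hs0
  calc |x / log (1 + s) - y / log s|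
      = |(x - y) / log (1 + s) + y * (log s - log (1 + s)) / (log (1 + s) * log s)| := by
        congr 1
        field_simp
        ring
    _ ≤ |x - y| / log (1 + s) + |y| * |log s - log (1 + s)| / (log (1 + s) * log s) := by
        refine (abs_add_le _ _).trans_eq ?_
        rw [abs_div, abs_div, abs_mul, abs_of_pos hlog', abs_of_pos (mul_pos hlog' hlog)]
    _ ≤ |x - y| / log s + |y| * s⁻¹ / (log s * log s) := by gcongr
    _ = (|x - y| + |y| / (s * log s)) / log s := by field_simp

lemma intervalIntegrable_inv_div_log {a b : ℝ} (ha : 1 < a) (hb : 1 < b) :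
    IntervalIntegrable (fun s ↦ s⁻¹ / log s) volume a b := by
  refine ContinuousOn.intervalIntegrable ?_
  fun_prop (disch := grind [log_pos, uIcc])

lemma two_div_log_two_lt_three : 2 / log 2 < 3 := by
  rw [div_lt_iff₀ (log_pos one_lt_two)]
  linarith [log_two_gt_d9]

end Log

section Steps

/-- The right endpoint `2 ^ 2 ^ k` of the support of the `k`-th function in the supremum `f0`; these
are the jump points of `f0`. -/
noncomputable def node (k : ℕ) : ℝ := 2 ^ 2 ^ k

/-- The value `2 ^ (k - 2 ^ k)` of the `k`-th function in the supremum `f0` on its support. -/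
noncomputable def height (k : ℕ) : ℝ := 2 ^ ((k : ℤ) - 2 ^ k)

lemma node_zero : node 0 = 2 := by norm_num [node]

lemma node_succ (k : ℕ) : node (k + 1) = node k ^ 2 := by
  rw [node, node, ← pow_mul, ← pow_succ]

lemma node_monotone : Monotone node := fun _ _ h ↦
  pow_le_pow_right₀ one_le_two (Nat.pow_le_pow_right two_pos h)

lemma two_le_node (k : ℕ) : 2 ≤ node k := node_zero.ge.trans (node_monotone k.zero_le)

lemma one_lt_node (k : ℕ) : 1 < node k := one_lt_two.trans_le (two_le_node k)

lemma node_pos (k : ℕ) : 0 < node k := one_pos.trans (one_lt_node k)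

lemma tendsto_node_atTop : Tendsto node atTop atTop :=
  (tendsto_pow_atTop_atTop_of_one_lt one_lt_two).comp
    (tendsto_pow_atTop_atTop_of_one_lt one_lt_two)

lemma log_node (k : ℕ) : log (node k) = 2 ^ k * log 2 := by
  rw [node, log_pow]
  norm_cast

lemma log_node_pos (k : ℕ) : 0 < log (node k) := log_pos (one_lt_node k)

lemma log_node_succ (k : ℕ) : log (node (k + 1)) = 2 * log (node k) := by
  rw [node_succ, log_pow, Nat.cast_two]

lemma log_div_log_node_mem_Icc {k : ℕ} {t : ℝ} (ht : t ∈ Icc (node k) (node (k + 1))) :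
    log t / log (node k) ∈ Icc 1 2 := by
  rw [mem_Icc, one_le_div (log_node_pos k), div_le_iff₀ (log_node_pos k), ← log_node_succ]
  exact ⟨log_le_log (node_pos k) ht.1, log_le_log ((node_pos k).trans_le ht.1) ht.2⟩

lemma two_pow_succ_div_log_node_lt_three (k : ℕ) : 2 ^ (k + 1) / log (node k) < 3 := by
  rw [log_node, pow_succ, mul_div_mul_left _ _ (by positivity)]
  exact two_div_log_two_lt_three

lemma height_pos (k : ℕ) : 0 < height k := zpow_pos two_pos _

lemma height_antitone : Antitone height := by
  refine antitone_nat_of_succ_le fun k ↦ zpow_le_zpow_right₀ one_le_two ?_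
  have : (1 : ℤ) ≤ 2 ^ k := one_le_pow₀ one_le_two
  push_cast
  linarith [pow_succ (2 : ℤ) k]

lemma height_mul_node (k : ℕ) : height k * node k = 2 ^ k := by
  rw [height, node, ← zpow_natCast, ← zpow_natCast, ← zpow_add₀ two_ne_zero]
  congr 1
  push_cast
  ring

lemma height_succ_mul_node_le_one (k : ℕ) : height (k + 1) * node k ≤ 1 := by
  rw [height, node, ← zpow_natCast, ← zpow_add₀ two_ne_zero]
  refine zpow_le_one_of_nonpos₀ one_le_two ?_
  have : (k + 1 : ℤ) ≤ 2 ^ k := mod_cast Nat.lt_two_pow_self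
  push_cast
  linarith [pow_succ (2 : ℤ) k]

lemma bddAbove_range_ite_height (t : ℝ) :
    BddAbove (range fun k ↦ if t < node k then height k else 0) := by
  refine ⟨height 0, forall_mem_range.2 fun k ↦ ?_⟩
  split_ifs
  exacts [height_antitone k.zero_le, (height_pos 0).le]

lemma f0_antitone : Antitone f0 := fun a b hab ↦ by
  refine ciSup_mono (bddAbove_range_ite_height a) fun k ↦ ?_
  change (if b < node k then height k else 0) ≤ if a < node k then height k else 0
  have := (height_pos k).le
  split_ifs <;> linarith

lemma f0_eq_height {k : ℕ} {t : ℝ} (hlt : t < node k) (hle : ∀ j < k, node j ≤ t) :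
    f0 t = height k := by
  refine IsGreatest.csSup_eq ⟨⟨k, if_pos hlt⟩, forall_mem_range.2 fun j ↦ ?_⟩
  change (if t < node j then height j else 0) ≤ height k
  split_ifs with hj
  · exact height_antitone (not_lt.1 fun hjk ↦ (hle j hjk).not_gt hj)
  · exact (height_pos k).le

end Steps

section Primitive

lemma integral_eq_mul_sub_of_eqOn_Ioo {f : ℝ → ℝ} {a b c : ℝ} (hab : a ≤ b)
    (hf : EqOn f (fun _ ↦ c) (Ioo a b)) : ∫ s in a..b, f s = c * (b - a) := by
  rw [intervalIntegral.integral_congr_Ioo_of_le hab hf, intervalIntegral.integral_const,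
    smul_eq_mul, mul_comm]

/-- The primitive `t ↦ ∫_0^t f0(s) ds`, the numerator of `a(t, f0)`. -/
noncomputable def f0Primitive (t : ℝ) : ℝ := ∫ s in (0 : ℝ)..t, f0 s

lemma continuous_f0Primitive : Continuous f0Primitive :=
  intervalIntegral.continuous_primitive (fun _ _ ↦ f0_antitone.intervalIntegrable) 0

lemma f0Primitive_node_zero : f0Primitive (node 0) = 1 := by
  rw [f0Primitive, integral_eq_mul_sub_of_eqOn_Ioo (node_pos 0).le fun s hs ↦
    f0_eq_height hs.2 (by simp), sub_zero, height_mul_node, pow_zero]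

lemma f0Primitive_eq_add {k : ℕ} {t : ℝ} (ht : t ∈ Icc (node k) (node (k + 1))) :
    f0Primitive t = f0Primitive (node k) + height (k + 1) * (t - node k) := by
  have hf0 : EqOn f0 (fun _ ↦ height (k + 1)) (Ioo (node k) t) := fun s hs ↦
    f0_eq_height (hs.2.trans_le ht.2) fun j hj ↦
      (node_monotone (Nat.le_of_lt_succ hj)).trans hs.1.le
  rw [← integral_eq_mul_sub_of_eqOn_Ioo ht.1 hf0, f0Primitive, f0Primitive,
    intervalIntegral.integral_add_adjacent_intervals f0_antitone.intervalIntegrable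
      f0_antitone.intervalIntegrable]

lemma abs_f0Primitive_node_sub_le (k : ℕ) : |f0Primitive (node k) - 2 ^ (k + 1)| ≤ k + 1 := by
  induction k with
  | zero => norm_num [f0Primitive_node_zero]
  | succ k ih =>
    have hstep : f0Primitive (node (k + 1)) - 2 ^ (k + 1 + 1)
        = (f0Primitive (node k) - 2 ^ (k + 1)) - height (k + 1) * node k := by
      rw [f0Primitive_eq_add ⟨node_monotone k.le_succ, le_rfl⟩, mul_sub, height_mul_node]
      ring
    have hnonneg : 0 ≤ height (k + 1) * node k := (mul_pos (height_pos _) (node_pos k)).le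
    rw [hstep]
    refine (abs_sub _ _).trans ?_
    rw [abs_of_nonneg hnonneg]
    push_cast
    linarith [height_succ_mul_node_le_one k]

lemma abs_f0Primitive_sub_le {k : ℕ} {t : ℝ} (ht : t ∈ Icc (node k) (node (k + 1))) :
    |f0Primitive t - 2 ^ (k + 1)| ≤ k + 1 + height (k + 1) * t := by
  have hnonneg : 0 ≤ height (k + 1) * (t - node k) :=
    mul_nonneg (height_pos _).le (sub_nonneg.2 ht.1)
  have hle : height (k + 1) * (t - node k) ≤ height (k + 1) * t :=
    mul_le_mul_of_nonneg_left (by linarith [node_pos k]) (height_pos _).le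
  rw [f0Primitive_eq_add ht, add_sub_right_comm]
  refine (abs_add_le _ _).trans (add_le_add (abs_f0Primitive_node_sub_le k) ?_)
  rwa [abs_of_nonneg hnonneg]

end Primitive

section LogIntegral

/-- The logarithmic integral `∫_1^t g(s) ds / s`, the numerator of `(M g)(t)`. -/
noncomputable def logIntegral (g : ℝ → ℝ) (t : ℝ) : ℝ := ∫ s in (1 : ℝ)..t, g s / s

lemma continuousOn_aF : ContinuousOn aF (Ioi 0) := by
  refine continuous_f0Primitive.continuousOn.div
    (ContinuousOn.log (by fun_prop) fun s hs ↦ ?_) fun s hs ↦ ?_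
  · linarith [mem_Ioi.1 hs]
  · exact (log_pos (by linarith [mem_Ioi.1 hs])).ne'

lemma intervalIntegrable_aF_div {a b : ℝ} (ha : 0 < a) (hb : 0 < b) :
    IntervalIntegrable (fun s ↦ aF s / s) volume a b :=
  ((continuousOn_aF.div continuousOn_id fun _ hs ↦ (mem_Ioi.1 hs).ne').mono fun _ hs ↦
    (lt_min ha hb).trans_le hs.1).intervalIntegrable

lemma abs_aF_sub_le {k : ℕ} {s : ℝ} (hs : s ∈ Icc (node k) (node (k + 1))) :
    |aF s - 2 ^ (k + 1) / log s| ≤ (k + 4 + height (k + 1) * s) / log s := by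
  have hs1 : 1 < s := (one_lt_node k).trans_le hs.1
  have hlog : log (node k) ≤ log s := log_le_log (node_pos k) hs.1
  have hlog_pos : 0 < log s := log_pos hs1
  have hsmall : |(2 : ℝ) ^ (k + 1)| / (s * log s) ≤ 3 :=
    calc |(2 : ℝ) ^ (k + 1)| / (s * log s) ≤ 2 ^ (k + 1) / (1 * log (node k)) := by
          rw [abs_of_pos (by positivity)]
          have := log_node_pos k
          gcongr
      _ ≤ 3 := by rw [one_mul]; exact (two_pow_succ_div_log_node_lt_three k).le
  refine (abs_div_log_one_add_sub_div_log_le (f0Primitive s) _ hs1).trans ?_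
  refine div_le_div_of_nonneg_right ?_ hlog_pos.le
  linarith [abs_f0Primitive_sub_le hs]

lemma abs_aF_div_sub_le {k : ℕ} {s : ℝ} (hs : s ∈ Icc (node k) (node (k + 1))) :
    |aF s / s - 2 ^ (k + 1) * (s⁻¹ / log s)|
      ≤ (k + 4) * (s⁻¹ / log s) + height (k + 1) / log (node k) := by
  have hs1 : 1 < s := (one_lt_node k).trans_le hs.1
  have hs0 : 0 < s := one_pos.trans hs1
  have hlog : log (node k) ≤ log s := log_le_log (node_pos k) hs.1
  have hlog_pos : 0 < log s := log_pos hs1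
  calc |aF s / s - 2 ^ (k + 1) * (s⁻¹ / log s)| = |(aF s - 2 ^ (k + 1) / log s) / s| := by
        congr 1
        field_simp
    _ = |aF s - 2 ^ (k + 1) / log s| / s := by rw [abs_div, abs_of_pos hs0]
    _ ≤ (k + 4 + height (k + 1) * s) / log s / s := by
        gcongr
        exact abs_aF_sub_le hs
    _ = (k + 4) * (s⁻¹ / log s) + height (k + 1) / log s := by field_simp
    _ ≤ (k + 4) * (s⁻¹ / log s) + height (k + 1) / log (node k) := by
        have := log_node_pos k
        have := height_pos (k + 1)
        gcongr

lemma integral_aF_div_error_le {k : ℕ} {t : ℝ} (ht : t ∈ Icc (node k) (node (k + 1))) :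
    (k + 4) * log (log t / log (node k)) + height (k + 1) / log (node k) * (t - node k)
      ≤ 7 * (k + 1) := by
  obtain ⟨hone, htwo⟩ := log_div_log_node_mem_Icc ht
  have hlog : log (log t / log (node k)) ≤ 1 := by
    linarith [log_le_sub_one_of_pos (one_pos.trans_le hone)]
  have hlinear : height (k + 1) / log (node k) * (t - node k) ≤ 3 :=
    calc height (k + 1) / log (node k) * (t - node k)
        ≤ height (k + 1) / log (node k) * node (k + 1) := by
          have := height_pos (k + 1)
          have := log_node_pos k
          gcongr
          linarith [ht.2, node_pos k]
      _ = 2 ^ (k + 1) / log (node k) := by rw [div_mul_eq_mul_div, height_mul_node]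
      _ ≤ 3 := (two_pow_succ_div_log_node_lt_three k).le
  nlinarith [k.cast_nonneg (α := ℝ)]

lemma abs_integral_aF_div_sub_le {k : ℕ} {t : ℝ} (ht : t ∈ Icc (node k) (node (k + 1))) :
    |(∫ s in node k..t, aF s / s) - 2 ^ (k + 1) * log (log t / log (node k))| ≤ 7 * (k + 1) := by
  have ht1 : 1 < t := (one_lt_node k).trans_le ht.1
  have kernel := intervalIntegrable_inv_div_log (one_lt_node k) ht1
  have hkernel : ∫ s in node k..t, s⁻¹ / log s = log (log t / log (node k)) := by
    rw [integral_inv_div_log (one_lt_node k) ht1,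
      log_div (log_pos ht1).ne' (log_node_pos k).ne']
  have bound := (kernel.const_mul (k + 4)).add
    (intervalIntegrable_const (c := height (k + 1) / log (node k)))
  refine le_trans ?_ (integral_aF_div_error_le ht)
  calc |(∫ s in node k..t, aF s / s) - 2 ^ (k + 1) * log (log t / log (node k))|
      = |∫ s in node k..t, (aF s / s - 2 ^ (k + 1) * (s⁻¹ / log s))| := by
        rw [intervalIntegral.integral_sub (intervalIntegrable_aF_div (node_pos k) (by linarith))
          (kernel.const_mul _), intervalIntegral.integral_const_mul, hkernel]
    _ ≤ ∫ s in node k..t, ((k + 4) * (s⁻¹ / log s) + height (k + 1) / log (node k)) := by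
        rw [← norm_eq_abs]
        exact intervalIntegral.norm_integral_le_of_norm_le ht.1 (ae_of_all _ fun s hs ↦
          abs_aF_div_sub_le ⟨hs.1.le, hs.2.trans ht.2⟩) bound
    _ = (k + 4) * log (log t / log (node k)) + height (k + 1) / log (node k) * (t - node k) := by
        rw [intervalIntegral.integral_add (kernel.const_mul _) intervalIntegrable_const,
          intervalIntegral.integral_const_mul, hkernel,
          intervalIntegral.integral_const, smul_eq_mul, mul_comm (t - node k)]

lemma logIntegral_aF_eq_add {a b : ℝ} (ha : 0 < a) (hb : 0 < b) :
    logIntegral aF b = logIntegral aF a + ∫ s in a..b, aF s / s :=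
  (intervalIntegral.integral_add_adjacent_intervals (intervalIntegrable_aF_div one_pos ha)
    (intervalIntegrable_aF_div ha hb)).symm

lemma abs_logIntegral_aF_sub_le_of_node {k : ℕ} {t E : ℝ}
    (hE : |logIntegral aF (node k) - 2 ^ (k + 1) * log 2| ≤ E)
    (ht : t ∈ Icc (node k) (node (k + 1))) :
    |logIntegral aF t - 2 ^ (k + 1) * log (2 * (log t / log (node k)))| ≤ E + 7 * (k + 1) := by
  have hratio : 0 < log t / log (node k) := one_pos.trans_le (log_div_log_node_mem_Icc ht).1
  have hsplit : logIntegral aF t - 2 ^ (k + 1) * log (2 * (log t / log (node k)))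
      = (logIntegral aF (node k) - 2 ^ (k + 1) * log 2)
        + ((∫ s in node k..t, aF s / s) - 2 ^ (k + 1) * log (log t / log (node k))) := by
    rw [logIntegral_aF_eq_add (node_pos k) ((node_pos k).trans_le ht.1),
      log_mul two_ne_zero hratio.ne']
    ring
  rw [hsplit]
  exact (abs_add_le _ _).trans (add_le_add hE (abs_integral_aF_div_sub_le ht))

lemma exists_abs_logIntegral_aF_node_sub_le :
    ∃ C : ℝ, ∀ k, |logIntegral aF (node k) - 2 ^ (k + 1) * log 2| ≤ 7 * k ^ 2 + C := by
  refine ⟨|logIntegral aF (node 0) - 2 * log 2|, fun k ↦ ?_⟩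
  induction k with
  | zero => simp
  | succ k ih =>
    have hratio : log (node (k + 1)) / log (node k) = 2 := by
      rw [log_node_succ, mul_div_cancel_right₀ _ (log_node_pos k).ne']
    have hmain : 2 ^ (k + 1) * log (2 * (log (node (k + 1)) / log (node k)))
        = 2 ^ (k + 1 + 1) * log 2 := by
      rw [hratio, log_mul two_ne_zero two_ne_zero]
      ring
    rw [← hmain]
    refine (abs_logIntegral_aF_sub_le_of_node ih ⟨node_monotone k.le_succ, le_rfl⟩).trans ?_
    push_cast
    nlinarith [k.cast_nonneg (α := ℝ)]

end LogIntegral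

section Profile

/-- The limit shape of `M a(·, f0)` on the block `[2 ^ 2 ^ k, 2 ^ 2 ^ (k + 1)]`, as a function of
`r = log t / log (2 ^ 2 ^ k)`. -/
noncomputable def profile (r : ℝ) : ℝ := 2 * log (2 * r) / (r * log 2)

lemma profile_le {r : ℝ} (hr : 0 < r) : profile r ≤ 4 / (exp 1 * log 2) := by
  have : 0 < log 2 := log_pos one_lt_two
  calc profile r ≤ 2 * (2 * r / exp 1) / (r * log 2) := by
        rw [profile]
        gcongr
        exact log_le_div_exp_one (by positivity)
    _ = 4 / (exp 1 * log 2) := by field_simp; norm_num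

lemma profile_exp_one_div_two : profile (exp 1 / 2) = 4 / (exp 1 * log 2) := by
  have : 0 < log 2 := log_pos one_lt_two
  rw [profile, mul_div_cancel₀ _ two_ne_zero, log_exp]
  field_simp
  norm_num

lemma abs_Mop_aF_sub_profile_le {k : ℕ} {t E : ℝ} (ht : t ∈ Icc (node k) (node (k + 1)))
    (hE : |logIntegral aF t - 2 ^ (k + 1) * log (2 * (log t / log (node k)))| ≤ E) :
    |Mop aF t - profile (log t / log (node k))| ≤ E / log (node k) := by
  have hlog : log (node k) ≤ log t := log_le_log (node_pos k) ht.1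
  have hlog_pos : 0 < log t := (log_node_pos k).trans_le hlog
  have hprofile : profile (log t / log (node k))
      = 2 ^ (k + 1) * log (2 * (log t / log (node k))) / log t := by
    have : 0 < log 2 := log_pos one_lt_two
    rw [profile, log_node]
    field_simp
    ring
  change |logIntegral aF t / log t - _| ≤ _
  rw [hprofile, ← sub_div, abs_div, abs_of_pos hlog_pos]
  exact div_le_div₀ ((abs_nonneg _).trans hE) hE (log_node_pos k) hlog

lemma tendsto_quadratic_div_log_node (a b c : ℝ) :
    Tendsto (fun k : ℕ ↦ (a * k ^ 2 + b * k + c) / log (node k)) atTop (𝓝 0) := by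
  have hpow (n : ℕ) := tendsto_pow_const_div_const_pow_of_one_lt n (one_lt_two (α := ℝ))
  have hlim := ((((hpow 2).const_mul a).add ((hpow 1).const_mul b)).add
    ((hpow 0).const_mul c)).div_const (log 2)
  simp only [mul_zero, add_zero, zero_div] at hlim
  refine hlim.congr fun k ↦ ?_
  rw [log_node]
  field_simp

lemma exists_tendsto_zero_abs_Mop_aF_sub_profile_le :
    ∃ ε : ℕ → ℝ, Tendsto ε atTop (𝓝 0) ∧ ∀ k, ∀ t ∈ Icc (node k) (node (k + 1)),
      |Mop aF t - profile (log t / log (node k))| ≤ ε k := by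
  obtain ⟨C, hC⟩ := exists_abs_logIntegral_aF_node_sub_le
  refine ⟨_, tendsto_quadratic_div_log_node 7 7 (C + 7), fun k t ht ↦
    abs_Mop_aF_sub_profile_le ht ?_⟩
  exact (abs_logIntegral_aF_sub_le_of_node (hC k) ht).trans_eq (by ring)

end Profile

section BlockLimits

lemma exists_ge_mem_Ico_node {K : ℕ} {t : ℝ} (ht : node K ≤ t) :
    ∃ k ≥ K, t ∈ Ico (node k) (node (k + 1)) := by
  have hunbounded : ¬BddAbove (node '' Ici K) := fun h ↦ by
    obtain ⟨b, hb⟩ := h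
    obtain ⟨k, hbk, hKk⟩ :=
      ((tendsto_node_atTop.eventually_gt_atTop b).and (eventually_ge_atTop K)).exists
    exact (hb (mem_image_of_mem node hKk)).not_gt hbk
  have hcover : ⋃ k ∈ Ici K, Ico (node k) (node (k + 1)) = Ici (node K) :=
    biUnion_Ici_Ico_map_succ (fun _ h ↦ node_monotone h) hunbounded
  simpa only [mem_iUnion, mem_Ici, exists_prop] using hcover.ge ht

lemma eventually_Mop_aF_lt {y : ℝ} (hy : 4 / (exp 1 * log 2) < y) :
    ∀ᶠ t in atTop, Mop aF t < y := by
  obtain ⟨ε, hε, happrox⟩ := exists_tendsto_zero_abs_Mop_aF_sub_profile_le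
  obtain ⟨K, hK⟩ := eventually_atTop.1 (hε.eventually_lt_const (sub_pos.2 hy))
  filter_upwards [eventually_ge_atTop (node K)] with t ht
  obtain ⟨k, hKk, htk⟩ := exists_ge_mem_Ico_node ht
  have htk' := Ico_subset_Icc_self htk
  have hprofile := profile_le (one_pos.trans_le (log_div_log_node_mem_Icc htk').1)
  linarith [le_of_abs_le (happrox k t htk'), hK k hKk]

lemma node_rpow_mem_Icc (k : ℕ) {r : ℝ} (hr : r ∈ Icc 1 2) :
    node k ^ r ∈ Icc (node k) (node (k + 1)) := by
  have hone : 1 ≤ node k := (one_lt_node k).le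
  rw [node_succ, ← rpow_two]
  exact ⟨self_le_rpow_of_one_le hone hr.1, rpow_le_rpow_of_exponent_le hone hr.2⟩

lemma tendsto_Mop_aF_node_rpow {r : ℝ} (hr : r ∈ Icc 1 2) :
    Tendsto (fun k ↦ Mop aF (node k ^ r)) atTop (𝓝 (profile r)) := by
  obtain ⟨ε, hε, happrox⟩ := exists_tendsto_zero_abs_Mop_aF_sub_profile_le
  refine tendsto_iff_norm_sub_tendsto_zero.2 (squeeze_zero (fun _ ↦ norm_nonneg _) (fun k ↦ ?_) hε)
  have hratio : log (node k ^ r) / log (node k) = r := by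
    rw [log_rpow (node_pos k), mul_div_cancel_right₀ _ (log_node_pos k).ne']
  simpa only [hratio, norm_eq_abs] using happrox k _ (node_rpow_mem_Icc k hr)

lemma mapClusterPt_profile_Mop_aF {r : ℝ} (hr : r ∈ Icc 1 2) :
    MapClusterPt (profile r) atTop (Mop aF) :=
  (tendsto_Mop_aF_node_rpow hr).mapClusterPt.of_comp
    (tendsto_atTop_mono (fun k ↦ (node_rpow_mem_Icc k hr).1) tendsto_node_atTop)

end BlockLimits

/-- `limsup_{t→∞} (M a(·,f0))(t) = 4/(e log 2)`. -/
theorem limsup_Mop_avA_f0 :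
    Filter.limsup (Mop aF) Filter.atTop = 4 / (Real.exp 1 * Real.log 2) := by
  have hmem : exp 1 / 2 ∈ Icc (1 : ℝ) 2 :=
    ⟨by linarith [exp_one_gt_d9], by linarith [exp_one_lt_d9]⟩
  have hcluster := mapClusterPt_profile_Mop_aF hmem
  rw [profile_exp_one_div_two] at hcluster
  exact limsup_eq_of_mapClusterPt hcluster fun _ ↦ eventually_Mop_aF_lt
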